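/- In any 2-crossed module (L →δ H →∂ G, ▷, {·,·}_p), for every h ∈ H and l ∈ L one has {h, δ(l)⁻¹}_p = (h ▷' l⁻¹) · (∂(h) ▷ l). -/

import Mathlib

/-- A 2-crossed module `(L --δ--> H --∂--> G, ▷, Peiffer lifting)`:
groups `G H L`, homomorphisms `δ : L → H` (field `δ`) and `∂ : H → G` (field `bd`)
with `∂ ∘ δ = 1`, left actions `▷` of `G` on `H` and `L` by automorphisms
(fields `actH`, `actL`; `G` acts on itself by conjugation), and the Peiffer
lifting `{·,·}_p : H × H → L` (field `pf`), subject to the usual axioms. -/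
structure TwoCrossedModule (G H L : Type*) [Group G] [Group H] [Group L] where
  δ : L →* H
  bd : H →* G
  actH : G →* MulAut H
  actL : G →* MulAut L
  pf : H → H → L
  comp_eq_one : ∀ l : L, bd (δ l) = 1
  -- (i) g ▷ ∂(h) = ∂(g ▷ h), where G acts on itself by conjugation
  act_bd : ∀ (g : G) (h : H), g * bd h * g⁻¹ = bd (actH g h)
  -- (i) g ▷ δ(l) = δ(g ▷ l)
  act_δ : ∀ (g : G) (l : L), actH g (δ l) = δ (actL g l)
  -- (ii) g ▷ {h₁,h₂}_p = {g ▷ h₁, g ▷ h₂}_p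
  act_pf : ∀ (g : G) (h₁ h₂ : H), actL g (pf h₁ h₂) = pf (actH g h₁) (actH g h₂)
  -- (iii) δ({h₁,h₂}_p) = h₁h₂h₁⁻¹·(∂(h₁) ▷ h₂⁻¹)
  δ_pf : ∀ h₁ h₂ : H, δ (pf h₁ h₂) = h₁ * h₂ * h₁⁻¹ * actH (bd h₁) h₂⁻¹
  -- (iv) {δ(l₁), δ(l₂)}_p = l₁l₂l₁⁻¹l₂⁻¹
  pf_δ_δ : ∀ l₁ l₂ : L, pf (δ l₁) (δ l₂) = l₁ * l₂ * l₁⁻¹ * l₂⁻¹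
  -- (v) {h₁h₂, h₃}_p = {h₁, h₂h₃h₂⁻¹}_p · (∂(h₁) ▷ {h₂,h₃}_p)
  pf_mul_left : ∀ h₁ h₂ h₃ : H,
    pf (h₁ * h₂) h₃ = pf h₁ (h₂ * h₃ * h₂⁻¹) * actL (bd h₁) (pf h₂ h₃)
  -- (vi) {h₁, h₂h₃}_p = {h₁,h₂}_p · {h₁,h₃}_p · {⟨h₁,h₃⟩_p⁻¹, ∂(h₁) ▷ h₂}_p,
  -- where ⟨h₁,h₃⟩_p = h₁h₃h₁⁻¹·(∂(h₁) ▷ h₃⁻¹) is the Peiffer commutator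
  pf_mul_right : ∀ h₁ h₂ h₃ : H,
    pf h₁ (h₂ * h₃) = pf h₁ h₂ * pf h₁ h₃ *
      pf (h₁ * h₃ * h₁⁻¹ * actH (bd h₁) h₃⁻¹)⁻¹ (actH (bd h₁) h₂)
  -- (vii) {δ(l), h}_p · {h, δ(l)}_p = l·(∂(h) ▷ l⁻¹)
  pf_δ : ∀ (h : H) (l : L), pf (δ l) h * pf h (δ l) = l * actL (bd h) l⁻¹

namespace TwoCrossedModule

variable {G H L : Type*} [Group G] [Group H] [Group L]

/-- The map `▷' : H × L → L`, defined by `h ▷' l = l · {δ(l)⁻¹, h}_p`. -/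
def act' (X : TwoCrossedModule G H L) (h : H) (l : L) : L :=
  l * X.pf (X.δ l)⁻¹ h

end TwoCrossedModule

/-!
By axioms (iii) and (vi), `{h₁, h₂h₃}_p = {h₁,h₂}_p · ((∂(h₁) ▷ h₂) ▷' {h₁,h₃}_p)`, and by (iv) the
map `δ(m) ▷' ·` is conjugation by `m`. Together they let one expand `{δ(l₂)⁻¹, δ(l₁)⁻¹ h δ(l₁)}_p`,
which shows that `h ▷' ·` is multiplicative, so that it commutes with inversion. Since
`{δ(l), h}_p = l · (h ▷' l⁻¹)`, axiom (vii) becomes `{h, δ(l)}_p = (h ▷' l) · (∂(h) ▷ l⁻¹)`.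
-/

namespace TwoCrossedModule

variable {G H L : Type*} [Group G] [Group H] [Group L] (X : TwoCrossedModule G H L)

lemma pf_mul_right_eq_mul_act' (h₁ h₂ h₃ : H) :
    X.pf h₁ (h₂ * h₃) = X.pf h₁ h₂ * X.act' (X.actH (X.bd h₁) h₂) (X.pf h₁ h₃) := by
  rw [X.pf_mul_right, ← X.δ_pf, act', mul_assoc]

lemma pf_δ_mul_right (l : L) (h₂ h₃ : H) :
    X.pf (X.δ l) (h₂ * h₃) = X.pf (X.δ l) h₂ * X.act' h₂ (X.pf (X.δ l) h₃) := by
  rw [X.pf_mul_right_eq_mul_act', X.comp_eq_one, map_one, MulAut.one_apply]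

lemma pf_δ_mul_left (l : L) (h₂ h₃ : H) :
    X.pf (X.δ l * h₂) h₃ = X.pf (X.δ l) (h₂ * h₃ * h₂⁻¹) * X.pf h₂ h₃ := by
  rw [X.pf_mul_left, X.comp_eq_one, map_one, MulAut.one_apply]

lemma act'_δ (m l : L) : X.act' (X.δ m) l = m * l * m⁻¹ := by
  rw [act', ← map_inv, X.pf_δ_δ]
  group

lemma δ_conj_eq_δ_pf_mul (l : L) (h : H) :
    X.δ l * h * (X.δ l)⁻¹ = X.δ (X.pf (X.δ l) h) * h := by
  rw [X.δ_pf, X.comp_eq_one, map_one, MulAut.one_apply, inv_mul_cancel_right]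

lemma act'_eq_mul_pf_δ_inv (h : H) (l : L) : X.act' h l = l * X.pf (X.δ l⁻¹) h := by
  rw [act', map_inv]

lemma pf_δ_left (l : L) (h : H) : X.pf (X.δ l) h = l * X.act' h l⁻¹ := by
  rw [act'_eq_mul_pf_δ_inv, inv_inv, mul_inv_cancel_left]

lemma pf_δ_conj_δ (l m : L) (h : H) :
    X.pf (X.δ l) (X.δ m * h * (X.δ m)⁻¹) =
      l * X.pf (X.δ m) h * l⁻¹ * X.pf (X.δ l) h * (X.pf (X.δ m) h)⁻¹ := by
  rw [δ_conj_eq_δ_pf_mul, pf_δ_mul_right, act'_δ, X.pf_δ_δ]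
  group

lemma act'_mul (h : H) (l₁ l₂ : L) : X.act' h (l₁ * l₂) = X.act' h l₁ * X.act' h l₂ := by
  simp only [act'_eq_mul_pf_δ_inv]
  rw [mul_inv_rev, map_mul, pf_δ_mul_left, pf_δ_conj_δ]
  group

lemma act'_inv (h : H) (l : L) : X.act' h l⁻¹ = (X.act' h l)⁻¹ :=
  map_inv (MonoidHom.mk' (X.act' h) (X.act'_mul h)) l

lemma pf_δ_right (h : H) (l : L) :
    X.pf h (X.δ l) = X.act' h l * X.actL (X.bd h) l⁻¹ := by
  calc X.pf h (X.δ l)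
      = (X.pf (X.δ l) h)⁻¹ * (l * X.actL (X.bd h) l⁻¹) := eq_inv_mul_of_mul_eq (X.pf_δ h l)
    _ = X.act' h l * X.actL (X.bd h) l⁻¹ := by
      rw [pf_δ_left, act'_inv]
      group

end TwoCrossedModule

/-- In any 2-crossed module, `{h, δ(l)⁻¹}_p = (h ▷' l⁻¹) · (∂(h) ▷ l)`. -/
theorem pf_δ_inv {G H L : Type*} [Group G] [Group H] [Group L]
    (X : TwoCrossedModule G H L) (h : H) (l : L) :
    X.pf h (X.δ l)⁻¹ = X.act' h l⁻¹ * X.actL (X.bd h) l := by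
  rw [← map_inv, X.pf_δ_right, inv_inv]
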